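/- arXiv:2505.02721 — 3 statements merged into one kernel-verified Lean document; each statement's English description precedes it below -/
import Mathlib

section
/- Let G be a group, K₁, …, K_k finite-index subgroups of G, n₁, …, n_k natural numbers, and m = Σᵢ nᵢ·[G:Kᵢ]. Let S be the disjoint union over i of (G⧸Kᵢ) × Fin nᵢ, fix a bijection e : S ≃ Fin m, and let σ : G → Σ_m be the associated permutation representation σ(g) = e ∘ (g • −) ∘ e⁻¹. Let X be a topological space with a G-action by homeomorphisms. Then the fixed-point set of the twisted G-action on Fin m → X, with the subspace topology of the product topology, is homeomorphic to the product over i of (Fin nᵢ → X^{Kᵢ}), where each X^{Kᵢ} carries the subspace topology and the product carries the product topology. -/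
/-!
A point of the twisted fixed-point set is a function `f` with `f (σ g a) = g • f a`, that is, a
`G`-equivariant map from `⨿ᵢ (G⧸Kᵢ) × Fin nᵢ` to `X`. Such a map is determined by its values at
the base cosets `(1·Kᵢ, j)`, each of which lies in `X^{Kᵢ}` because `Kᵢ` stabilises the base coset;
conversely a family `x i j ∈ X^{Kᵢ}` extends by `(gKᵢ, j) ↦ g • x i j`, which does not depend on
the representative `g` (`smul_eq_smul_of_mk_eq`). Both directions are continuous: each
coordinate is a coordinate projection, followed in the second case by the action of one fixed
group element.
-/

theorem smul_eq_smul_of_mk_eq {G X : Type*} [Group G] [MulAction G X] {K : Subgroup G} {x : X}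
    (hx : ∀ κ ∈ K, κ • x = x) {a b : G} (hab : (a : G ⧸ K) = b) : a • x = b • x := by
  have h := hx _ (QuotientGroup.eq.mp hab)
  rw [mul_smul, inv_smul_eq_iff] at h
  exact h.symm

/-- The map `(gKᵢ, j) ↦ g • p i j` on `⨿ᵢ (G⧸Kᵢ) × Fin nᵢ` extending a family `p i j ∈ X^{Kᵢ}`,
computed with a chosen representative of each coset. -/
noncomputable def cosetExtend {G X : Type*} [Group G] [MulAction G X] {k : ℕ}
    {K : Fin k → Subgroup G} {n : Fin k → ℕ}
    (p : ∀ i : Fin k, Fin (n i) → {x : X // ∀ κ ∈ K i, κ • x = x})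
    (s : Σ i : Fin k, (G ⧸ K i) × Fin (n i)) : X :=
  s.2.1.out • (p s.1 s.2.2).1

/-- With `K₁, …, K_k` finite-index subgroups of `G`, `m = Σᵢ nᵢ·[G:Kᵢ]`, a bijection
`e : ⨿ᵢ (G⧸Kᵢ) × Fin nᵢ ≃ Fin m` and `σ : G →* Σ_m` the associated permutation
representation, and `X` a topological space with a `G`-action by homeomorphisms: the
fixed-point set of the twisted `G`-action on `Fin m → X` (subspace topology of the product
topology) is homeomorphic to `∏ᵢ (Fin nᵢ → X^{Kᵢ})`, where each `X^{Kᵢ}` carries the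
subspace topology and the products carry the product topology. -/
theorem twisted_fixed_points_homeomorph_prod_of_fixed_points
    {G X : Type*} [Group G] [MulAction G X] [TopologicalSpace X]
    (hcont : ∀ g : G, Continuous fun x : X => g • x) (k : ℕ)
    (K : Fin k → Subgroup G) (hK : ∀ i, (K i).FiniteIndex)
    (n : Fin k → ℕ) (m : ℕ)
    (hm : m = ∑ i : Fin k, n i * (K i).index)
    (e : (Σ i : Fin k, (G ⧸ K i) × Fin (n i)) ≃ Fin m)
    (σ : G →* Equiv.Perm (Fin m))
    (hσ : ∀ (g : G) (i : Fin k) (x : G ⧸ K i) (j : Fin (n i)),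
      σ g (e ⟨i, (x, j)⟩) = e ⟨i, (g • x, j)⟩) :
    Nonempty
      ({f : Fin m → X // ∀ (g : G) (i : Fin m), g • f ((σ g)⁻¹ i) = f i} ≃ₜ
        (∀ i : Fin k, Fin (n i) → {x : X // ∀ κ ∈ K i, κ • x = x})) := by
  have equivariant (f : {f : Fin m → X // ∀ (g : G) (i : Fin m), g • f ((σ g)⁻¹ i) = f i})
      (g : G) (i : Fin k) (x : G ⧸ K i) (j : Fin (n i)) :
      f.1 (e ⟨i, (g • x, j)⟩) = g • f.1 (e ⟨i, (x, j)⟩) := by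
    rw [← hσ, ← f.2 g (σ g _), Equiv.Perm.inv_def, Equiv.symm_apply_apply]
  refine ⟨{
    toFun := fun f i j => ⟨f.1 (e ⟨i, (((1 : G) : G ⧸ K i), j)⟩), fun κ hκ => ?_⟩
    invFun := fun p => ⟨fun a => cosetExtend p (e.symm a), ?_⟩
    left_inv := ?_
    right_inv := ?_
    continuous_toFun := ?_
    continuous_invFun := ?_ }⟩
  · have hbase : κ • ((1 : G) : G ⧸ K i) = ((1 : G) : G ⧸ K i) := by
      rw [MulAction.Quotient.smul_coe, QuotientGroup.eq]
      simpa using hκ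
    rw [← equivariant, hbase]
  · intro g a
    -- Substituting `a = σ g (e s)` removes the inverse permutation.
    obtain ⟨b, rfl⟩ := (σ g).surjective a
    obtain ⟨⟨i, x, j⟩, rfl⟩ := e.surjective b
    rw [Equiv.Perm.inv_def, Equiv.symm_apply_apply, hσ]
    dsimp only
    rw [Equiv.symm_apply_apply, Equiv.symm_apply_apply]
    dsimp only [cosetExtend]
    rw [← mul_smul]
    apply smul_eq_smul_of_mk_eq (p i j).2
    rw [QuotientGroup.out_eq', ← smul_eq_mul, ← MulAction.Quotient.smul_coe,
      QuotientGroup.out_eq']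
  · intro f
    ext a
    obtain ⟨⟨i, x, j⟩, rfl⟩ := e.surjective a
    dsimp only
    rw [Equiv.symm_apply_apply]
    dsimp only [cosetExtend]
    rw [← equivariant, MulAction.Quotient.smul_coe, smul_eq_mul, mul_one, QuotientGroup.out_eq']
  · intro p
    funext i j
    apply Subtype.ext
    dsimp only
    rw [Equiv.symm_apply_apply]
    dsimp only [cosetExtend]
    rw [smul_eq_smul_of_mk_eq (p i j).2 (QuotientGroup.out_eq' _), one_smul]
  · refine continuous_pi fun i => continuous_pi fun j => Continuous.subtype_mk ?_ _
    exact (continuous_apply _).comp continuous_subtype_val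
  · refine Continuous.subtype_mk (continuous_pi fun a => (hcont _).comp ?_) _
    exact continuous_subtype_val.comp ((continuous_apply _).comp (continuous_apply _))
end

section
/- Let R be a commutative ring, G a group, and V an R-module equipped with an action of G by R-linear automorphisms. Let K₁, …, K_k be finite-index subgroups of G, n₁, …, n_k natural numbers, m = Σᵢ nᵢ·[G:Kᵢ], S the disjoint union over i of (G⧸Kᵢ) × Fin nᵢ, e : S ≃ Fin m a bijection, and σ : G → Σ_m the associated permutation representation σ(g) = e ∘ (g • −) ∘ e⁻¹. Then the fixed points of the twisted G-action on functions Fin m → V form an R-submodule of the R-module of functions Fin m → V, and evaluation at the points e(identity coset Kᵢ, j) defines an R-linear isomorphism from this submodule onto the product over i of (Fin nᵢ → V^{Kᵢ}), where V^{Kᵢ} is the submodule of Kᵢ-fixed vectors. -/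
/-!
A function `f` is fixed by the twisted action iff it is equivariant, `f (σ g y) = g • f y`.
Transported along `e`, this reads `f (gKᵢ, j) = g • f (Kᵢ, j)`, so `f` is determined by its values at
the identity cosets, and these values are `Kᵢ`-fixed because `κKᵢ = Kᵢ` for `κ ∈ Kᵢ`. Conversely,
`Kᵢ`-fixed vectors `w i j` extend to the equivariant function `(gKᵢ, j) ↦ g • w i j`, which does not
depend on the representative `g`.
-/

/-- The `R`-submodule `V^K` of vectors fixed by a subgroup `K`. -/
def fixedVectors (R : Type*) {G V : Type*} [CommRing R] [Group G] [AddCommGroup V] [Module R V]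
    [DistribMulAction G V] [SMulCommClass G R V] (K : Subgroup G) : Submodule R V where
  carrier := {v | ∀ κ ∈ K, κ • v = v}
  zero_mem' κ _ := smul_zero κ
  add_mem' ha hb κ hκ := by rw [smul_add, ha κ hκ, hb κ hκ]
  smul_mem' r v hv κ hκ := by rw [smul_comm, hv κ hκ]

/-- The `R`-submodule of functions fixed by the action `(g • f) i = g • f (σ(g)⁻¹ i)`. -/
def twistedFixed (R : Type*) {G V : Type*} [CommRing R] [Group G] [AddCommGroup V] [Module R V]
    [DistribMulAction G V] [SMulCommClass G R V] {m : ℕ} (σ : G →* Equiv.Perm (Fin m)) :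
    Submodule R (Fin m → V) where
  carrier := {f | ∀ (g : G) (i : Fin m), g • f ((σ g)⁻¹ i) = f i}
  zero_mem' g _ := smul_zero g
  add_mem' ha hb g i := by
    rw [Pi.add_apply, Pi.add_apply, smul_add, ha g i, hb g i]
  smul_mem' r f hf g i := by
    rw [Pi.smul_apply, Pi.smul_apply, smul_comm, hf g i]

theorem twistedFixed_apply {R G V : Type*} [CommRing R] [Group G] [AddCommGroup V] [Module R V]
    [DistribMulAction G V] [SMulCommClass G R V] {m : ℕ} {σ : G →* Equiv.Perm (Fin m)}
    {f : Fin m → V} (hf : f ∈ twistedFixed R σ) (g : G) (y : Fin m) :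
    f (σ g y) = g • f y := by
  have h := hf g (σ g y)
  rw [show (σ g)⁻¹ (σ g y) = y from (σ g).symm_apply_apply y] at h
  exact h.symm

/-- A `K`-fixed vector is moved in the same way by all representatives of a coset of `K`. -/
theorem out_smul_fixedVectors {R G V : Type*} [CommRing R] [Group G] [AddCommGroup V] [Module R V]
    [DistribMulAction G V] [SMulCommClass G R V] {K : Subgroup G} {v : V}
    (hv : v ∈ fixedVectors R K) (g : G) :
    (QuotientGroup.mk g : G ⧸ K).out • v = g • v := by
  obtain ⟨κ, hκ⟩ := QuotientGroup.mk_out_eq_mul K g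
  rw [hκ, mul_smul, hv κ κ.2]

/-- Let `R` be a commutative ring, `G` a group, `V` an `R`-module with a `G`-action by
`R`-linear automorphisms.  With `K₁, …, K_k` finite-index subgroups of `G`,
`m = Σᵢ nᵢ·[G:Kᵢ]`, a bijection `e : ⨿ᵢ (G⧸Kᵢ) × Fin nᵢ ≃ Fin m` and `σ : G →* Σ_m` the
associated permutation representation: the fixed points of the twisted `G`-action on
functions `Fin m → V` form an `R`-submodule of `Fin m → V`, and evaluation at the points
`e (Kᵢ, j)` (identity cosets) defines an `R`-linear isomorphism from this submodule onto
`∏ᵢ (Fin nᵢ → V^{Kᵢ})`, where `V^{Kᵢ}` is the submodule of `Kᵢ`-fixed vectors. -/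
theorem twisted_fixed_points_submodule_linear_equiv
    {R G V : Type*} [CommRing R] [Group G] [AddCommGroup V] [Module R V]
    [DistribMulAction G V] [SMulCommClass G R V] (k : ℕ)
    (K : Fin k → Subgroup G) (hK : ∀ i, (K i).FiniteIndex)
    (n : Fin k → ℕ) (m : ℕ)
    (hm : m = ∑ i : Fin k, n i * (K i).index)
    (e : (Σ i : Fin k, (G ⧸ K i) × Fin (n i)) ≃ Fin m)
    (σ : G →* Equiv.Perm (Fin m))
    (hσ : ∀ (g : G) (i : Fin k) (x : G ⧸ K i) (j : Fin (n i)),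
      σ g (e ⟨i, (x, j)⟩) = e ⟨i, (g • x, j)⟩) :
    ∃ Wfix : ∀ i : Fin k, Submodule R V,
      (∀ i, (Wfix i : Set V) = {v : V | ∀ κ ∈ K i, κ • v = v}) ∧
      ∃ W : Submodule R (Fin m → V),
        (W : Set (Fin m → V)) =
          {f : Fin m → V | ∀ (g : G) (i : Fin m), g • f ((σ g)⁻¹ i) = f i} ∧
        ∃ φ : W ≃ₗ[R] (∀ i : Fin k, Fin (n i) → Wfix i),
          ∀ (f : W) (i : Fin k) (j : Fin (n i)),
            ((φ f) i j : V) = (f : Fin m → V) (e ⟨i, (QuotientGroup.mk (1 : G), j)⟩) := by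
  refine ⟨fun i => fixedVectors R (K i), fun i => rfl, twistedFixed R σ, rfl, ?_⟩
  have value (f : twistedFixed (V := V) R σ) (g : G) (i : Fin k) (j : Fin (n i)) :
      (f : Fin m → V) (e ⟨i, (QuotientGroup.mk g, j)⟩)
        = g • (f : Fin m → V) (e ⟨i, (QuotientGroup.mk 1, j)⟩) := by
    rw [← twistedFixed_apply f.2, hσ, MulAction.Quotient.smul_mk, smul_eq_mul, mul_one]
  let ev : twistedFixed (V := V) R σ →ₗ[R] (∀ i : Fin k, Fin (n i) → fixedVectors (V := V) R (K i)) :=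
    { toFun := fun f i j => ⟨(f : Fin m → V) (e ⟨i, (QuotientGroup.mk 1, j)⟩), fun κ hκ => by
        have h : (QuotientGroup.mk κ : G ⧸ K i) = QuotientGroup.mk 1 :=
          QuotientGroup.eq.2 (by simpa using hκ)
        rw [← value, h]⟩
      map_add' := fun _ _ => rfl
      map_smul' := fun _ _ => rfl }
  refine ⟨LinearEquiv.ofBijective ev ⟨?_, ?_⟩, fun _ _ _ => rfl⟩
  · intro f f' hff
    ext y
    obtain ⟨⟨i, x, j⟩, rfl⟩ := e.surjective y
    obtain ⟨g, rfl⟩ := QuotientGroup.mk_surjective x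
    have h : (f : Fin m → V) (e ⟨i, (QuotientGroup.mk 1, j)⟩)
        = (f' : Fin m → V) (e ⟨i, (QuotientGroup.mk 1, j)⟩) :=
      congrArg Subtype.val (congrFun (congrFun hff i) j)
    rw [value, value f', h]
  · intro w
    let F₀ : (Σ i : Fin k, (G ⧸ K i) × Fin (n i)) → V := fun s => s.2.1.out • (w s.1 s.2.2 : V)
    let F : Fin m → V := fun y => F₀ (e.symm y)
    have hF (g : G) (i : Fin k) (j : Fin (n i)) :
        F (e ⟨i, (QuotientGroup.mk g, j)⟩) = g • (w i j : V) := by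
      simp only [F, Equiv.symm_apply_apply]
      exact out_smul_fixedVectors (w i j).2 g
    refine ⟨⟨F, fun g y => ?_⟩, ?_⟩
    · obtain ⟨y, rfl⟩ := (σ g).surjective y
      rw [show (σ g)⁻¹ (σ g y) = y from (σ g).symm_apply_apply y]
      obtain ⟨⟨i, x, j⟩, rfl⟩ := e.surjective y
      obtain ⟨a, rfl⟩ := QuotientGroup.mk_surjective x
      rw [hσ, MulAction.Quotient.smul_mk, hF, hF, smul_eq_mul, mul_smul]
    · funext i j
      exact Subtype.ext ((hF 1 i j).trans (one_smul G _))
end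

section
/- Let G be a finite group and let K₁, …, K_k be a complete list of representatives of the conjugacy classes of subgroups of G, one subgroup in each class. Then for every natural number m and every group homomorphism σ : G → Σ_m there exists a unique tuple (n₁, …, n_k) of natural numbers with Σᵢ nᵢ·[G:Kᵢ] = m such that Fin m equipped with the G-action via σ is G-equivariantly bijective to the disjoint union over i of (G⧸Kᵢ) × Fin nᵢ. Consequently, the conjugacy classes of homomorphisms G → Σ_m under the conjugation action of Σ_m are in bijection with the tuples (n₁, …, n_k) of natural numbers satisfying Σᵢ nᵢ·[G:Kᵢ] = m. -/
/-!
A finite `G`-set is the disjoint union of its orbits, and an orbit with a point of stabilizer `H`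
is `G ⧸ H`. Moving the base point inside the orbit replaces `H` by an arbitrary conjugate, so every
orbit contains a point whose stabilizer is exactly one of the `K i`. Counting the orbits of each
type `i` gives the tuple `n` and the equivariant bijection with `⨿ᵢ (G ⧸ K i) × Fin (n i)`
(`exists_equivariant_equiv`); comparing cardinalities gives `∑ n i * [G : K i] = m`.

For uniqueness (`le_of_equivariant_injective`), an equivariant injection between two such unions
preserves stabilizers, hence, the `K i` being pairwise non-conjugate, it preserves the type `i` of
each orbit; being injective it sends distinct orbits to distinct orbits, so `n i ≤ n' i`.

Two homomorphisms are conjugate exactly when the `G`-sets they define are isomorphic, i.e. when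
they have the same tuple, and each admissible tuple occurs by transporting the action on
`⨿ᵢ (G ⧸ K i) × Fin (n i)` along a bijection with `Fin m`. This is the second claim.
-/

/-- The conjugation equivalence relation on homomorphisms `G → Σ_m`: `σ ~ σ'` iff
`σ' = c σ(−) c⁻¹` for some `c ∈ Σ_m`. -/
def homConjSetoid (G : Type*) [Group G] (m : ℕ) : Setoid (G →* Equiv.Perm (Fin m)) where
  r σ σ' := ∃ c : Equiv.Perm (Fin m), ∀ g : G, σ' g = c * σ g * c⁻¹
  iseqv := by
    constructor
    · intro σ
      exact ⟨1, fun g => by simp⟩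
    · rintro σ σ' ⟨c, hc⟩
      exact ⟨c⁻¹, fun g => by rw [hc g]; group⟩
    · rintro σ σ' σ'' ⟨c, hc⟩ ⟨d, hd⟩
      exact ⟨d * c, fun g => by rw [hd g, hc g]; group⟩

/-- The underlying set of the `G`-set `⨿ᵢ (G ⧸ K i) × Fin (n i)`. -/
abbrev CosetUnion {G : Type*} [Group G] {k : ℕ} (K : Fin k → Subgroup G) (n : Fin k → ℕ) :=
  Σ i : Fin k, (G ⧸ K i) × Fin (n i)

/-- The action of `g` on `⨿ᵢ (G ⧸ K i) × Fin (n i)`: left translation on cosets, trivial on the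
indices `i` and on the factors `Fin (n i)`. -/
def cosetAct {G : Type*} [Group G] {k : ℕ} {K : Fin k → Subgroup G} {n : Fin k → ℕ}
    (g : G) (y : CosetUnion K n) : CosetUnion K n :=
  ⟨y.1, (g • y.2.1, y.2.2)⟩

lemma cosetAct_one {G : Type*} [Group G] {k : ℕ} {K : Fin k → Subgroup G} {n : Fin k → ℕ}
    (y : CosetUnion K n) : cosetAct (1 : G) y = y := by
  obtain ⟨i, q, j⟩ := y
  exact congrArg (fun q => (⟨i, (q, j)⟩ : CosetUnion K n)) (one_smul G q)

lemma cosetAct_mul {G : Type*} [Group G] {k : ℕ} {K : Fin k → Subgroup G} {n : Fin k → ℕ}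
    (g h : G) (y : CosetUnion K n) : cosetAct (g * h) y = cosetAct g (cosetAct h y) := by
  obtain ⟨i, q, j⟩ := y
  exact congrArg (fun q => (⟨i, (q, j)⟩ : CosetUnion K n)) (mul_smul g h q)

/-- The permutation representation of `G` on `⨿ᵢ (G ⧸ K i) × Fin (n i)`. -/
def cosetPerm {G : Type*} [Group G] {k : ℕ} (K : Fin k → Subgroup G) (n : Fin k → ℕ) :
    G →* Equiv.Perm (CosetUnion K n) where
  toFun g :=
    { toFun := cosetAct g
      invFun := cosetAct g⁻¹
      left_inv := fun y => by rw [← cosetAct_mul, inv_mul_cancel, cosetAct_one]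
      right_inv := fun y => by rw [← cosetAct_mul, mul_inv_cancel, cosetAct_one] }
  map_one' := Equiv.ext cosetAct_one
  map_mul' g h := Equiv.ext (cosetAct_mul g h)

lemma card_cosetUnion {G : Type*} [Group G] [Finite G] {k : ℕ} (K : Fin k → Subgroup G)
    (n : Fin k → ℕ) : Nat.card (CosetUnion K n) = ∑ i : Fin k, n i * (K i).index := by
  rw [Nat.card_sigma]
  refine Finset.sum_congr rfl fun i _ => ?_
  rw [Nat.card_prod, Nat.card_fin, mul_comm, Subgroup.index]

/-- An injective equivariant map `f` preserves stabilizers, so it maps the base point of an orbit of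
type `i` into an orbit of type `i`. -/
lemma fst_eq_of_equivariant_injective {G : Type*} [Group G] {k : ℕ} {K : Fin k → Subgroup G}
    (hnc : ∀ i j : Fin k, i ≠ j → ∀ g : G, (K i).map (MulAut.conj g).toMonoidHom ≠ K j)
    {n n' : Fin k → ℕ} (f : CosetUnion K n → CosetUnion K n') (hf : Function.Injective f)
    (hact : ∀ (g : G) y, f (cosetAct g y) = cosetAct g (f y)) (i : Fin k) (j : Fin (n i)) :
    (f ⟨i, ((1 : G), j)⟩).1 = i := by
  rcases hy : f ⟨i, ((1 : G), j)⟩ with ⟨i', q, j'⟩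
  obtain ⟨a, rfl⟩ := QuotientGroup.mk_surjective q
  by_contra hne
  refine hnc i' i hne a ?_
  ext g
  -- both sides are the stabilizer of a point: on the left of `f y`, on the right of `y`
  have h1 : g ∈ K i ↔ cosetAct g (⟨i, ((1 : G), j)⟩ : CosetUnion K n) = ⟨i, ((1 : G), j)⟩ := by
    simp only [cosetAct, Sigma.mk.injEq, heq_eq_eq, true_and, Prod.mk.injEq, and_true]
    rw [MulAction.Quotient.smul_coe, eq_comm, QuotientGroup.eq]
    simp
  rw [h1, ← hf.eq_iff, hact, hy]
  simp only [cosetAct, Sigma.mk.injEq, heq_eq_eq, true_and, Prod.mk.injEq, and_true]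
  rw [MulAction.Quotient.smul_coe, eq_comm (a := ((g • a : G) : G ⧸ K i')), QuotientGroup.eq,
    Subgroup.mem_map_equiv]
  simp [MulAut.conj_symm_apply, mul_assoc]

/-- The base points of the `n i` orbits of type `i` are mapped into pairwise distinct orbits of
type `i`. -/
lemma le_of_equivariant_injective {G : Type*} [Group G] {k : ℕ} {K : Fin k → Subgroup G}
    (hnc : ∀ i j : Fin k, i ≠ j → ∀ g : G, (K i).map (MulAut.conj g).toMonoidHom ≠ K j)
    {n n' : Fin k → ℕ} (f : CosetUnion K n → CosetUnion K n') (hf : Function.Injective f)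
    (hact : ∀ (g : G) y, f (cosetAct g y) = cosetAct g (f y)) (i : Fin k) : n i ≤ n' i := by
  have key : ∀ j : Fin (n i), ∃ (a : G) (j' : Fin (n' i)),
      f ⟨i, ((1 : G), j)⟩ = ⟨i, ((a : G), j')⟩ := by
    intro j
    have h := fst_eq_of_equivariant_injective hnc f hf hact i j
    rcases hy : f ⟨i, ((1 : G), j)⟩ with ⟨i', q, j'⟩
    rw [hy] at h
    obtain rfl : i' = i := h
    obtain ⟨a, rfl⟩ := QuotientGroup.mk_surjective q
    exact ⟨a, j', rfl⟩
  choose a φ hφ using key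
  have hinj : Function.Injective φ := by
    intro j₁ j₂ h
    -- the images of the two base points lie in one orbit, so the base points do too
    have h2 : f (cosetAct (a j₂ * (a j₁)⁻¹) ⟨i, ((1 : G), j₁)⟩) = f ⟨i, ((1 : G), j₂)⟩ := by
      rw [hact, hφ, hφ, h]
      simp [cosetAct]
    have h3 := hf h2
    simp only [cosetAct, Sigma.mk.injEq, heq_eq_eq, true_and, Prod.mk.injEq] at h3
    exact h3.2
  simpa using Fintype.card_le_of_injective φ hinj

/-- Every orbit contains a point whose stabilizer is one of the representatives `K i`. -/
lemma exists_rep_stabilizer {G : Type*} [Group G] {k : ℕ} {K : Fin k → Subgroup G}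
    (hrep : ∀ H : Subgroup G, ∃ (i : Fin k) (g : G),
      H = (K i).map (MulAut.conj g).toMonoidHom)
    {X : Type*} [MulAction G X] (ω : MulAction.orbitRel.Quotient G X) :
    ∃ (i : Fin k) (x : X), Quotient.mk'' x = ω ∧ MulAction.stabilizer G x = K i := by
  induction ω using Quotient.inductionOn' with
  | h x =>
    obtain ⟨i, g, h⟩ := hrep (MulAction.stabilizer G x)
    refine ⟨i, g⁻¹ • x, Quotient.sound' ⟨g⁻¹, rfl⟩, ?_⟩
    rw [MulAction.stabilizer_smul_eq_stabilizer_map_conj, h, Subgroup.map_map]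
    convert Subgroup.map_id (K i)
    ext y
    simp [mul_assoc]

/-- The bijection is inverse to `(i, aK, j) ↦ a • r`, where `r` is the chosen point with stabilizer
`K i` in the `j`-th orbit of type `i`. -/
lemma exists_equivariant_equiv {G : Type*} [Group G] {k : ℕ} {K : Fin k → Subgroup G}
    (hrep : ∀ H : Subgroup G, ∃ (i : Fin k) (g : G),
      H = (K i).map (MulAut.conj g).toMonoidHom)
    (X : Type*) [MulAction G X] [Finite X] :
    ∃ (n : Fin k → ℕ) (e : X ≃ CosetUnion K n), ∀ (g : G) (x : X),
      e (g • x) = cosetAct g (e x) := by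
  choose τ r hr hst using exists_rep_stabilizer hrep (X := X)
  have : Finite (MulAction.orbitRel.Quotient G X) := Quotient.finite _
  let n : Fin k → ℕ := fun i => Nat.card {ω // τ ω = i}
  let ε : ∀ i, Fin (n i) ≃ {ω // τ ω = i} := fun i => (Finite.equivFin _).symm
  have hK : ∀ i (j : Fin (n i)), MulAction.stabilizer G (r (ε i j).1) = K i := by
    intro i j
    rw [hst, (ε i j).2]
  have hwd : ∀ i (j : Fin (n i)) (a b : G), (QuotientGroup.leftRel (K i)) a b →
      a • r (ε i j).1 = b • r (ε i j).1 := by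
    intro i j a b hab
    rw [QuotientGroup.leftRel_apply, ← hK i j, MulAction.mem_stabilizer_iff, mul_smul,
      inv_smul_eq_iff] at hab
    exact hab.symm
  let F : CosetUnion K n → X := fun y =>
    Quotient.liftOn' y.2.1 (fun a => a • r (ε y.1 y.2.2).1) (hwd y.1 y.2.2)
  have hF : ∀ i (a : G) (j : Fin (n i)), F ⟨i, ((a : G), j)⟩ = a • r (ε i j).1 :=
    fun _ _ _ => rfl
  have horb : ∀ (a : G) (ω : MulAction.orbitRel.Quotient G X),
      (Quotient.mk'' (a • r ω) : MulAction.orbitRel.Quotient G X) = ω := by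
    intro a ω
    conv_rhs => rw [← hr ω]
    exact Quotient.sound' ⟨a, rfl⟩
  have hact : ∀ (g : G) y, F (cosetAct g y) = g • F y := by
    rintro g ⟨i, q, j⟩
    obtain ⟨a, rfl⟩ := QuotientGroup.mk_surjective q
    simp only [cosetAct, MulAction.Quotient.smul_coe, hF, smul_eq_mul, mul_smul]
  have hinj : Function.Injective F := by
    rintro ⟨i, q, j⟩ ⟨i', q', j'⟩ h
    obtain ⟨a, rfl⟩ := QuotientGroup.mk_surjective q
    obtain ⟨b, rfl⟩ := QuotientGroup.mk_surjective q'
    rw [hF, hF] at h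
    have hω : (ε i j).1 = (ε i' j').1 := by
      rw [← horb a (ε i j).1, h, horb]
    obtain rfl : i = i' := by rw [← (ε i j).2, hω, (ε i' j').2]
    obtain rfl : j = j' := (ε i).injective (Subtype.ext hω)
    have hab : (a : G ⧸ K i) = b := by
      rw [QuotientGroup.eq, ← hK i j, MulAction.mem_stabilizer_iff, mul_smul, inv_smul_eq_iff, h]
    rw [hab]
  have hsurj : Function.Surjective F := by
    intro x
    let ω : MulAction.orbitRel.Quotient G X := Quotient.mk'' x
    obtain ⟨a, ha⟩ : x ∈ MulAction.orbit G (r ω) := Quotient.exact' (hr ω).symm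
    refine ⟨⟨τ ω, ((a : G), (ε (τ ω)).symm ⟨ω, rfl⟩)⟩, ?_⟩
    rw [hF, Equiv.apply_symm_apply]
    exact ha
  let E : CosetUnion K n ≃ X := Equiv.ofBijective F ⟨hinj, hsurj⟩
  refine ⟨n, E.symm, fun g x => ?_⟩
  obtain ⟨y, rfl⟩ := E.surjective x
  have h : g • E y = E (cosetAct g y) := (hact g y).symm
  rw [h, E.symm_apply_apply, E.symm_apply_apply]

/-- Let `G` be a finite group and `K₁, …, K_k` a complete list of representatives of the
conjugacy classes of subgroups of `G`.  For every `m` and every homomorphism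
`σ : G → Σ_m` there is a unique tuple `(n₁, …, n_k)` with `Σᵢ nᵢ·[G:Kᵢ] = m` such that
`Fin m` with the `G`-action via `σ` is `G`-equivariantly bijective to
`⨿ᵢ (G⧸Kᵢ) × Fin nᵢ`.  Consequently, the conjugacy classes of homomorphisms `G → Σ_m`
are in bijection with the tuples `(n₁, …, n_k)` with `Σᵢ nᵢ·[G:Kᵢ] = m`. -/
theorem perm_rep_classification {G : Type*} [Group G] [Finite G] (k : ℕ)
    (K : Fin k → Subgroup G)
    (hrep : ∀ H : Subgroup G, ∃ (i : Fin k) (g : G),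
      H = (K i).map (MulAut.conj g).toMonoidHom)
    (hnc : ∀ i j : Fin k, i ≠ j → ∀ g : G, (K i).map (MulAut.conj g).toMonoidHom ≠ K j)
    (m : ℕ) :
    (∀ σ : G →* Equiv.Perm (Fin m),
      ∃! n : Fin k → ℕ, (∑ i : Fin k, n i * (K i).index) = m ∧
        ∃ e : Fin m ≃ (Σ i : Fin k, (G ⧸ K i) × Fin (n i)),
          ∀ (g : G) (x : Fin m),
            e (σ g x) = ⟨(e x).1, (g • (e x).2.1, (e x).2.2)⟩) ∧
    Nonempty (Quotient (homConjSetoid G m) ≃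
      {n : Fin k → ℕ // (∑ i : Fin k, n i * (K i).index) = m}) := by
  classical
  -- existence and uniqueness, with the action on the union written as `cosetAct`
  have part1 : ∀ σ : G →* Equiv.Perm (Fin m),
      ∃! n : Fin k → ℕ, (∑ i : Fin k, n i * (K i).index) = m ∧
        ∃ e : Fin m ≃ CosetUnion K n, ∀ (g : G) (x : Fin m), e (σ g x) = cosetAct g (e x) := by
    intro σ
    let _ : MulAction G (Fin m) := MulAction.compHom (Fin m) σ
    obtain ⟨n, e, he⟩ := exists_equivariant_equiv hrep (Fin m)
    refine ⟨n, ⟨?_, e, he⟩, ?_⟩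
    · rw [← card_cosetUnion, ← Nat.card_congr e, Nat.card_fin]
    -- an equivariant bijection in each direction gives both inequalities
    · rintro n' ⟨-, e', he'⟩
      have aux : ∀ {p q : Fin k → ℕ} (u : Fin m ≃ CosetUnion K p) (v : Fin m ≃ CosetUnion K q),
          (∀ (g : G) (x : Fin m), u (σ g x) = cosetAct g (u x)) →
          (∀ (g : G) (x : Fin m), v (σ g x) = cosetAct g (v x)) → p ≤ q := by
        intro p q u v hu hv i
        refine le_of_equivariant_injective hnc (u.symm.trans v) (Equiv.injective _)
          (fun g y => ?_) i
        obtain ⟨x, rfl⟩ := u.surjective y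
        rw [← hu]
        simp [hv]
      exact le_antisymm (aux e' e he' he) (aux e e' he he')
  refine ⟨part1, ?_⟩
  choose n hn huniq using part1
  have hconj : ∀ σ σ' : G →* Equiv.Perm (Fin m), (homConjSetoid G m) σ σ' → n σ = n σ' := by
    rintro σ σ' ⟨c, hc⟩
    obtain ⟨hs, e, he⟩ := hn σ'
    refine (huniq σ (n σ') ⟨hs, c.trans e, fun g x => ?_⟩).symm
    have h := he g (c x)
    rw [hc] at h
    simpa using h
  let Φ : Quotient (homConjSetoid G m) →
      {n : Fin k → ℕ // (∑ i : Fin k, n i * (K i).index) = m} :=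
    Quotient.lift (fun σ => ⟨n σ, (hn σ).1⟩) fun σ σ' h => Subtype.ext (hconj σ σ' h)
  refine ⟨Equiv.ofBijective Φ ⟨?_, ?_⟩⟩
  · intro s t
    induction s, t using Quotient.inductionOn₂ with
    | h σ σ' =>
      intro h
      have hnn : n σ = n σ' := congrArg Subtype.val h
      obtain ⟨-, e, he⟩ := hn σ
      obtain ⟨e', he'⟩ : ∃ e' : Fin m ≃ CosetUnion K (n σ), ∀ (g : G) (x : Fin m),
          e' (σ' g x) = cosetAct g (e' x) := by
        rw [hnn]
        exact (hn σ').2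
      refine Quotient.sound ⟨e.trans e'.symm, fun g => Equiv.ext fun x => e'.injective ?_⟩
      obtain ⟨y, rfl⟩ := (e.trans e'.symm).surjective x
      rw [he', Equiv.Perm.mul_apply, Equiv.Perm.mul_apply, Equiv.Perm.inv_def,
        Equiv.symm_apply_apply]
      simp [he]
  · rintro ⟨p, hp⟩
    have hcard : Nat.card (CosetUnion K p) = m := by
      rw [card_cosetUnion, hp]
    have u : CosetUnion K p ≃ Fin m := Finite.equivFinOfCardEq hcard
    let σ : G →* Equiv.Perm (Fin m) := u.permCongrHom.toMonoidHom.comp (cosetPerm K p)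
    refine ⟨Quotient.mk _ σ, Subtype.ext ?_⟩
    refine (huniq σ p ⟨hp, u.symm, fun g x => ?_⟩).symm
    simp [σ, cosetPerm, Equiv.permCongrHom]
end
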